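/- arXiv:2511.09541 — 3 statements merged into one kernel-verified Lean document; each statement's English description precedes it below -/
import Mathlib

section
/- For all real parameters γ₁,γ₂,γ₃,γ₄ there exists a point x ∈ ℝ⁴ at which the gradients of the three functions H₄ = p₁² + p₂² + Σ_{n=1}^{4} γₙ (q₁p₁ + q₂p₂)ⁿ, C = q₁p₂ − q₂p₁, and 𝓘₄ = p₂² + γ₁ q₂p₂ + γ₂ (q₁²+q₂²) p₂² + γ₃ ( q₂³p₂³ + (q₁³+3q₁q₂²)p₂²p₁ − q₂³p₂p₁² ) + γ₄ ( (q₂⁴−q₁⁴)p₂⁴ + 4(q₁³q₂+q₁q₂³)p₂³p₁ + (q₁⁴−q₂⁴)p₂²p₁² ) are linearly independent over ℝ; hence {H₄, C, 𝓘₄} is a functionally independent set. -/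
noncomputable section

/-- Partial derivative of a real-valued function on ℝ⁴ in the `i`-th coordinate.
Coordinates: `x 0 = q₁`, `x 1 = q₂`, `x 2 = p₁`, `x 3 = p₂`. -/
def pdR (i : Fin 4) (f : (Fin 4 → ℝ) → ℝ) (x : Fin 4 → ℝ) : ℝ :=
  deriv (fun t => f (Function.update x i t)) (x i)

/-- The gradient `(∂f/∂q₁, ∂f/∂q₂, ∂f/∂p₁, ∂f/∂p₂) ∈ ℝ⁴`. -/
def grad (f : (Fin 4 → ℝ) → ℝ) (x : Fin 4 → ℝ) : Fin 4 → ℝ :=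
  fun i => pdR i f x

/-- The generalized classical Zernike Hamiltonian for `N = 4` with real parameters:
`H₄ = p₁² + p₂² + Σ_{n=1}^{4} γₙ (q₁p₁ + q₂p₂)ⁿ`. -/
def H4R (γ₁ γ₂ γ₃ γ₄ : ℝ) (x : Fin 4 → ℝ) : ℝ :=
  let q1 := x 0; let q2 := x 1; let p1 := x 2; let p2 := x 3
  let D := q1 * p1 + q2 * p2
  p1^2 + p2^2 + γ₁ * D + γ₂ * D^2 + γ₃ * D^3 + γ₄ * D^4

/-- The angular momentum `C = q₁p₂ − q₂p₁`. -/
def angMomR (x : Fin 4 → ℝ) : ℝ :=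
  x 0 * x 3 - x 1 * x 2

/-- The fourth-order constant of motion `𝓘₄` with real parameters. -/
def I4R (γ₁ γ₂ γ₃ γ₄ : ℝ) (x : Fin 4 → ℝ) : ℝ :=
  let q1 := x 0; let q2 := x 1; let p1 := x 2; let p2 := x 3
  p2^2 + γ₁ * (q2 * p2) + γ₂ * ((q1^2 + q2^2) * p2^2)
    + γ₃ * (q2^3 * p2^3 + (q1^3 + 3*q1*q2^2) * p2^2 * p1 - q2^3 * p2 * p1^2)
    + γ₄ * ((q2^4 - q1^4) * p2^4 + 4*(q1^3*q2 + q1*q2^3) * p2^3 * p1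
        + (q1^4 - q2^4) * p2^2 * p1^2)

/-- For all real parameters `γ₁,γ₂,γ₃,γ₄` there is a point of ℝ⁴ at which the
gradients of `H₄`, `C` and `𝓘₄` are linearly independent over ℝ; hence
`{H₄, C, 𝓘₄}` is a functionally independent set. -/
theorem H4_C_I4_functionally_independent (γ₁ γ₂ γ₃ γ₄ : ℝ) :
    ∃ x : Fin 4 → ℝ,
      LinearIndependent ℝ
        ![grad (H4R γ₁ γ₂ γ₃ γ₄) x, grad angMomR x, grad (I4R γ₁ γ₂ γ₃ γ₄) x] := by
  refine ⟨![0, 0, 1, 1], ?_⟩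
  have e0 : grad (H4R γ₁ γ₂ γ₃ γ₄) ![0, 0, 1, 1] 0 = γ₁ := by
    have h : HasDerivAt (fun t : ℝ => 1 + 1 + γ₁ * t + γ₂ * t^2 + γ₃ * t^3 + γ₄ * t^4) γ₁ 0 := by
      have := ((((hasDerivAt_id (0:ℝ)).const_mul γ₁).const_add (1+1)).add
        (((hasDerivAt_pow 2 (0:ℝ)).const_mul γ₂))).add
        (((hasDerivAt_pow 3 (0:ℝ)).const_mul γ₃)) |>.add (((hasDerivAt_pow 4 (0:ℝ)).const_mul γ₄))
      exact this.congr_deriv (by simp)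
    have := h.deriv
    simpa [grad, pdR, H4R, Function.update] using this
  have e2 : grad (H4R γ₁ γ₂ γ₃ γ₄) ![0, 0, 1, 1] 2 = 2 := by
    simp [grad, pdR, H4R, Function.update]
  have e3 : grad (H4R γ₁ γ₂ γ₃ γ₄) ![0, 0, 1, 1] 3 = 2 := by
    simp [grad, pdR, H4R, Function.update]
  have c0 : grad angMomR ![0, 0, 1, 1] 0 = 1 := by
    simp [grad, pdR, angMomR, Function.update]
  have c2 : grad angMomR ![0, 0, 1, 1] 2 = 0 := by
    simp [grad, pdR, angMomR, Function.update]
  have c3 : grad angMomR ![0, 0, 1, 1] 3 = 0 := by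
    simp [grad, pdR, angMomR, Function.update]
  have i2 : grad (I4R γ₁ γ₂ γ₃ γ₄) ![0, 0, 1, 1] 2 = 0 := by
    simp [grad, pdR, I4R, Function.update]
  have i3 : grad (I4R γ₁ γ₂ γ₃ γ₄) ![0, 0, 1, 1] 3 = 2 := by
    simp [grad, pdR, I4R, Function.update]
  rw [Fintype.linearIndependent_iff]
  intro g hg
  have h0 := congrFun hg 0
  have h2 := congrFun hg 2
  have h3 := congrFun hg 3
  simp [Fin.sum_univ_three, e0, e2, e3, c0, c2, c3, i2, i3] at h0 h2 h3
  have k2 : g 2 = 0 := by simpa [h2] using h3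
  have k1 : g 1 = 0 := by simpa [h2, k2] using h0
  intro i
  fin_cases i
  · exact h2
  · exact k1
  · exact k2
end
end

section
/- For all complex parameters γ₁,γ₂,γ₃,γ₄, define L₁ = C/2, L₂ = (𝓘₄' − 𝓘₄)/2 and L₃ = {L₁, L₂}. Then {L₁, L₃} = −L₂ identically on ℝ⁴. -/
noncomputable section

/-- Partial derivative of a complex-valued function on ℝ⁴ in the `i`-th coordinate.
Coordinates: `x 0 = q₁`, `x 1 = q₂`, `x 2 = p₁`, `x 3 = p₂`. -/
def pd (i : Fin 4) (f : (Fin 4 → ℝ) → ℂ) (x : Fin 4 → ℝ) : ℂ :=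
  deriv (fun t => f (Function.update x i t)) (x i)

/-- Canonical Poisson bracket on ℝ⁴:
`{f,g} = Σᵢ (∂f/∂qᵢ ∂g/∂pᵢ − ∂f/∂pᵢ ∂g/∂qᵢ)`. -/
def poisson (f g : (Fin 4 → ℝ) → ℂ) (x : Fin 4 → ℝ) : ℂ :=
  (pd 0 f x * pd 2 g x - pd 2 f x * pd 0 g x)
    + (pd 1 f x * pd 3 g x - pd 3 f x * pd 1 g x)

/-- The angular momentum `C = q₁p₂ − q₂p₁`. -/
def angMom (x : Fin 4 → ℝ) : ℂ :=
  ((x 0 * x 3 - x 1 * x 2 : ℝ) : ℂ)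

/-- The fourth-order constant of motion `𝓘₄`. -/
def I4 (γ₁ γ₂ γ₃ γ₄ : ℂ) (x : Fin 4 → ℝ) : ℂ :=
  let q1 : ℂ := (x 0 : ℝ); let q2 : ℂ := (x 1 : ℝ)
  let p1 : ℂ := (x 2 : ℝ); let p2 : ℂ := (x 3 : ℝ)
  p2^2 + γ₁ * (q2 * p2) + γ₂ * ((q1^2 + q2^2) * p2^2)
    + γ₃ * (q2^3 * p2^3 + (q1^3 + 3*q1*q2^2) * p2^2 * p1 - q2^3 * p2 * p1^2)
    + γ₄ * ((q2^4 - q1^4) * p2^4 + 4*(q1^3*q2 + q1*q2^3) * p2^3 * p1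
        + (q1^4 - q2^4) * p2^2 * p1^2)

/-- `𝓘₄'`: obtained from `𝓘₄` by the interchange `(q₁,p₁) ↔ (q₂,p₂)`. -/
def I4' (γ₁ γ₂ γ₃ γ₄ : ℂ) (x : Fin 4 → ℝ) : ℂ :=
  I4 γ₁ γ₂ γ₃ γ₄ ![x 1, x 0, x 3, x 2]

/-- `L₁ = C/2`. -/
def L1 (x : Fin 4 → ℝ) : ℂ := angMom x / 2

/-- `L₂ = (𝓘₄' − 𝓘₄)/2`. -/
def L2 (γ₁ γ₂ γ₃ γ₄ : ℂ) (x : Fin 4 → ℝ) : ℂ :=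
  (I4' γ₁ γ₂ γ₃ γ₄ x - I4 γ₁ γ₂ γ₃ γ₄ x) / 2

/-- `L₃ = {L₁, L₂}`. -/
def L3 (γ₁ γ₂ γ₃ γ₄ : ℂ) (x : Fin 4 → ℝ) : ℂ :=
  poisson L1 (L2 γ₁ γ₂ γ₃ γ₄) x

open MvPolynomial in
theorem hasDerivAt_eval_update (p : MvPolynomial (Fin 4) ℂ) (i : Fin 4) (x : Fin 4 → ℝ) :
    HasDerivAt (fun t : ℝ => eval (fun j => ((Function.update x i t j : ℝ) : ℂ)) p)
      (eval (fun j => ((x j : ℝ) : ℂ)) (pderiv i p)) (x i) := by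
  induction p using MvPolynomial.induction_on with
  | C a => simpa using hasDerivAt_const (x i) a
  | add p q hp hq =>
    simp only [map_add]
    exact hp.add hq
  | mul_X p j hp =>
    have hX : HasDerivAt (fun t : ℝ => ((Function.update x i t j : ℝ) : ℂ))
        (if j = i then 1 else 0) (x i) := by
      by_cases h : j = i
      · subst h
        simpa using (hasDerivAt_id (x j)).ofReal_comp
      · simpa [h] using hasDerivAt_const (x i) ((x j : ℝ) : ℂ)
    have := hp.mul hX
    simp only [Function.update_eq_self] at this
    simp only [map_mul, eval_X, Derivation.leibniz, smul_eq_mul, map_add]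
    have e : (eval (fun j => ((x j : ℝ) : ℂ)) p * eval (fun j => ((x j : ℝ) : ℂ)) (pderiv i (X j))
        + ((x j : ℝ) : ℂ) * eval (fun j => ((x j : ℝ) : ℂ)) (pderiv i p))
        = eval (fun j => ((x j : ℝ) : ℂ)) (pderiv i p) * ((x j : ℝ) : ℂ)
          + eval (fun j => ((x j : ℝ) : ℂ)) p * (if j = i then 1 else 0) := by
      rw [pderiv_X]
      by_cases h : j = i
      · subst h
        simp
        ring
      · simp [h, Ne.symm h]
        ring
    rw [e]
    exact this

open MvPolynomial in
theorem pd_eval (p : MvPolynomial (Fin 4) ℂ) (i : Fin 4) (x : Fin 4 → ℝ) :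
    pd i (fun y => eval (fun j => ((y j : ℝ) : ℂ)) p) x
      = eval (fun j => ((x j : ℝ) : ℂ)) (pderiv i p) :=
  (hasDerivAt_eval_update p i x).deriv

open MvPolynomial in
def polyPoisson (p q : MvPolynomial (Fin 4) ℂ) : MvPolynomial (Fin 4) ℂ :=
  (pderiv 0 p * pderiv 2 q - pderiv 2 p * pderiv 0 q)
    + (pderiv 1 p * pderiv 3 q - pderiv 3 p * pderiv 1 q)

open MvPolynomial in
theorem poisson_eval (p q : MvPolynomial (Fin 4) ℂ) :
    poisson (fun y => eval (fun j => ((y j : ℝ) : ℂ)) p)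
      (fun y => eval (fun j => ((y j : ℝ) : ℂ)) q)
      = fun y => eval (fun j => ((y j : ℝ) : ℂ)) (polyPoisson p q) := by
  funext x
  simp [poisson, pd_eval, polyPoisson]

open MvPolynomial in
def polyI (γ₁ γ₂ γ₃ γ₄ : ℂ) (q1 q2 p1 p2 : MvPolynomial (Fin 4) ℂ) : MvPolynomial (Fin 4) ℂ :=
  p2^2 + C γ₁ * (q2 * p2) + C γ₂ * ((q1^2 + q2^2) * p2^2)
    + C γ₃ * (q2^3 * p2^3 + (q1^3 + C 3*q1*q2^2) * p2^2 * p1 - q2^3 * p2 * p1^2)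
    + C γ₄ * ((q2^4 - q1^4) * p2^4 + C 4*(q1^3*q2 + q1*q2^3) * p2^3 * p1
        + (q1^4 - q2^4) * p2^2 * p1^2)

open MvPolynomial in
def polyL1 : MvPolynomial (Fin 4) ℂ := C (1/2) * (X 0 * X 3 - X 1 * X 2)

open MvPolynomial in
def polyL2 (γ₁ γ₂ γ₃ γ₄ : ℂ) : MvPolynomial (Fin 4) ℂ :=
  C (1/2) * (polyI γ₁ γ₂ γ₃ γ₄ (X 1) (X 0) (X 3) (X 2)
    - polyI γ₁ γ₂ γ₃ γ₄ (X 0) (X 1) (X 2) (X 3))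

open MvPolynomial in
theorem L1_eq : L1 = fun y => eval (fun j => ((y j : ℝ) : ℂ)) polyL1 := by
  funext y
  simp [L1, angMom, polyL1]
  ring

open MvPolynomial in
theorem L2_eq (γ₁ γ₂ γ₃ γ₄ : ℂ) : L2 γ₁ γ₂ γ₃ γ₄
    = fun y => eval (fun j => ((y j : ℝ) : ℂ)) (polyL2 γ₁ γ₂ γ₃ γ₄) := by
  funext y
  simp [L2, I4', I4, polyL2, polyI]
  ring

open MvPolynomial in
theorem polyPoisson_L1 (q : MvPolynomial (Fin 4) ℂ) :
    polyPoisson polyL1 q = C (1/2) * (X 3 * pderiv 2 q + X 1 * pderiv 0 q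
      - X 2 * pderiv 3 q - X 0 * pderiv 1 q) := by
  simp [polyPoisson, polyL1, pderiv_X, Pi.single_apply, Derivation.leibniz]
  ring

open MvPolynomial in
theorem poly_main (γ₁ γ₂ γ₃ γ₄ : ℂ) (z : Fin 4 → ℂ) :
    eval z (polyPoisson polyL1 (polyPoisson polyL1 (polyL2 γ₁ γ₂ γ₃ γ₄)))
      = - eval z (polyL2 γ₁ γ₂ γ₃ γ₄) := by
  have h : polyPoisson polyL1 (polyL2 γ₁ γ₂ γ₃ γ₄) = 
      C (1) * (X 2) * (X 3)
      + C (1/2) * (X 0) * (X 3) * C γ₁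
      + C (1) * (X 1)^2 * (X 2) * (X 3) * C γ₂
      + C (1) * (X 0)^2 * (X 2) * (X 3) * C γ₂
      + C (1) * (X 0)^3 * (X 2)^2 * (X 3) * C γ₃
      + C (1) * (X 1)^3 * (X 2) * (X 3)^2 * C γ₃
      + C (-1/2) * (X 0)^3 * (X 3)^3 * C γ₃
      + C (1) * (X 0)^4 * (X 2)^3 * (X 3) * C γ₄
      + C (4) * (X 0) * (X 1)^3 * (X 2)^2 * (X 3)^2 * C γ₄
      + C (4) * (X 0)^3 * (X 1) * (X 2)^2 * (X 3)^2 * C γ₄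
      + C (-1) * (X 0)^4 * (X 2) * (X 3)^3 * C γ₄
      + C (1/2) * (X 1) * (X 2) * C γ₁
      + C (3/2) * (X 0) * (X 1)^2 * (X 2)^2 * (X 3) * C γ₃
      + C (-1/2) * (X 1)^3 * (X 2)^3 * C γ₃
      + C (-1) * (X 1)^4 * (X 2)^3 * (X 3) * C γ₄
      + C (1) * (X 1)^4 * (X 2) * (X 3)^3 * C γ₄
      + C (3/2) * (X 0)^2 * (X 1) * (X 2) * (X 3)^2 * C γ₃ := by
    rw [polyPoisson_L1]
    apply MvPolynomial.funext
    intro w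
    simp [polyL2, polyI, pderiv_X, Pi.single_apply, Derivation.leibniz, Derivation.leibniz_pow]
    ring
  rw [h, polyPoisson_L1]
  simp [polyL2, polyI, pderiv_X, Pi.single_apply, Derivation.leibniz, Derivation.leibniz_pow]
  ring

/-- `{L₁, L₃} = −L₂` identically on ℝ⁴. -/
theorem poisson_L1_L3 (γ₁ γ₂ γ₃ γ₄ : ℂ) :
    ∀ x : Fin 4 → ℝ, poisson L1 (L3 γ₁ γ₂ γ₃ γ₄) x = -(L2 γ₁ γ₂ γ₃ γ₄ x) := by
  intro x
  have h3 : L3 γ₁ γ₂ γ₃ γ₄ = fun y => MvPolynomial.eval (fun j => ((y j : ℝ) : ℂ))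
      (polyPoisson polyL1 (polyL2 γ₁ γ₂ γ₃ γ₄)) := by
    rw [← poisson_eval, ← L1_eq, ← L2_eq]
    rfl
  rw [h3, L1_eq, poisson_eval, L2_eq]
  exact poly_main γ₁ γ₂ γ₃ γ₄ _
end
end

section
/- For every N ∈ ℕ with N ≥ 1 and all complex parameters γ₁,…,γ_N, the generalized quantum Zernike Hamiltonian Ĥ_N = p̂₁² + p̂₂² + Σ_{n=1}^{N} γₙ D̂ⁿ commutes with the quantum angular momentum Ĉ = q̂₁p̂₂ − q̂₂p̂₁: for every smooth function ψ : ℝ² → ℂ one has Ĥ_N(Ĉψ) = Ĉ(Ĥ_Nψ). -/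
noncomputable section

/-- Wavefunctions on the plane. -/
abbrev WF := (ℝ × ℝ) → ℂ

/-- Operators acting on wavefunctions. -/
abbrev Op := WF → WF

/-- Position operator `q̂₁`: multiplication by `q₁`. -/
def q1op : Op := fun ψ x => (x.1 : ℂ) * ψ x

/-- Position operator `q̂₂`: multiplication by `q₂`. -/
def q2op : Op := fun ψ x => (x.2 : ℂ) * ψ x

/-- Momentum operator `p̂₁ = −i ∂/∂q₁`. -/
def p1op : Op := fun ψ x => -Complex.I * deriv (fun t => ψ (t, x.2)) x.1

/-- Momentum operator `p̂₂ = −i ∂/∂q₂`. -/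
def p2op : Op := fun ψ x => -Complex.I * deriv (fun t => ψ (x.1, t)) x.2

/-- The dilation operator `D̂ = q̂₁p̂₁ + q̂₂p̂₂`. -/
def Dop : Op := q1op ∘ p1op + q2op ∘ p2op

/-- The quantum angular momentum `Ĉ = q̂₁p̂₂ − q̂₂p̂₁`. -/
def Cop : Op := q1op ∘ p2op - q2op ∘ p1op

/-- The generalized quantum Zernike Hamiltonian
`Ĥ_N = p̂₁² + p̂₂² + Σ_{n=1}^{N} γₙ D̂ⁿ`. -/
def HNop (N : ℕ) (γ : ℕ → ℂ) : Op :=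
  p1op ∘ p1op + p2op ∘ p2op + ∑ n ∈ Finset.Icc 1 N, γ n • Dop^[n]

/-- Smoothness. -/
def Sm (f : WF) : Prop := ContDiff ℝ (⊤ : ℕ∞) f

lemma p1_eq {f : WF} (hf : Sm f) : p1op f = fun x => -Complex.I * fderiv ℝ f x (1, 0) := by
  funext x
  have hd : HasFDerivAt f (fderiv ℝ f x) (x.1, x.2) :=
    (ContDiff.differentiable hf (by simp) x).hasFDerivAt
  have h2 : HasDerivAt (fun t : ℝ => (t, x.2)) ((1 : ℝ), (0 : ℝ)) x.1 :=
    (hasDerivAt_id x.1).prodMk (hasDerivAt_const x.1 x.2)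
  have := hd.comp_hasDerivAt x.1 h2
  simp only [p1op]
  congr 1
  exact this.deriv

lemma p2_eq {f : WF} (hf : Sm f) : p2op f = fun x => -Complex.I * fderiv ℝ f x (0, 1) := by
  funext x
  have hd : HasFDerivAt f (fderiv ℝ f x) (x.1, x.2) :=
    (ContDiff.differentiable hf (by simp) x).hasFDerivAt
  have h2 : HasDerivAt (fun t : ℝ => (x.1, t)) ((0 : ℝ), (1 : ℝ)) x.2 :=
    (hasDerivAt_const x.2 x.1).prodMk (hasDerivAt_id x.2)
  have := hd.comp_hasDerivAt x.2 h2
  simp only [p2op]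
  congr 1
  exact this.deriv

lemma sm_fd {f : WF} (hf : Sm f) (v : ℝ × ℝ) : Sm (fun x => fderiv ℝ f x v) :=
  (ContDiff.fderiv_right (m := ((⊤ : ℕ∞) : WithTop ℕ∞)) hf (by simp)).clm_apply contDiff_const

lemma sm_p1 {f : WF} (hf : Sm f) : Sm (p1op f) := by
  rw [p1_eq hf]; exact ContDiff.mul contDiff_const (sm_fd hf _)

lemma sm_p2 {f : WF} (hf : Sm f) : Sm (p2op f) := by
  rw [p2_eq hf]; exact ContDiff.mul contDiff_const (sm_fd hf _)

lemma sm_q1 {f : WF} (hf : Sm f) : Sm (q1op f) :=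
  ContDiff.mul (Complex.ofRealCLM.contDiff.comp contDiff_fst) hf

lemma sm_q2 {f : WF} (hf : Sm f) : Sm (q2op f) :=
  ContDiff.mul (Complex.ofRealCLM.contDiff.comp contDiff_snd) hf

lemma sm_add {f g : WF} (hf : Sm f) (hg : Sm g) : Sm (f + g) := ContDiff.add hf hg
lemma sm_sub {f g : WF} (hf : Sm f) (hg : Sm g) : Sm (f - g) := ContDiff.sub hf hg
lemma sm_smul {f : WF} (c : ℂ) (hf : Sm f) : Sm (c • f) := ContDiff.const_smul c hf

lemma sm_diff {f : WF} (hf : Sm f) (x : ℝ × ℝ) : DifferentiableAt ℝ f x :=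
  ContDiff.differentiable hf (by simp) x

lemma p1_add {f g : WF} (hf : Sm f) (hg : Sm g) : p1op (f + g) = p1op f + p1op g := by
  rw [p1_eq hf, p1_eq hg, p1_eq (sm_add hf hg)]
  funext x
  simp [fderiv_add (sm_diff hf x) (sm_diff hg x)]; ring

lemma p2_add {f g : WF} (hf : Sm f) (hg : Sm g) : p2op (f + g) = p2op f + p2op g := by
  rw [p2_eq hf, p2_eq hg, p2_eq (sm_add hf hg)]
  funext x
  simp [fderiv_add (sm_diff hf x) (sm_diff hg x)]; ring

lemma p1_smul {f : WF} (c : ℂ) (hf : Sm f) : p1op (c • f) = c • p1op f := by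
  rw [p1_eq hf, p1_eq (sm_smul c hf)]
  funext x
  simp [fderiv_const_smul (sm_diff hf x) c]; ring

lemma p2_smul {f : WF} (c : ℂ) (hf : Sm f) : p2op (c • f) = c • p2op f := by
  rw [p2_eq hf, p2_eq (sm_smul c hf)]
  funext x
  simp [fderiv_const_smul (sm_diff hf x) c]; ring

lemma p1_sub {f g : WF} (hf : Sm f) (hg : Sm g) : p1op (f - g) = p1op f - p1op g := by
  have : f - g = f + (-1 : ℂ) • g := by simp [sub_eq_add_neg]
  rw [this, p1_add hf (sm_smul _ hg), p1_smul _ hg]; simp [sub_eq_add_neg]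

lemma p2_sub {f g : WF} (hf : Sm f) (hg : Sm g) : p2op (f - g) = p2op f - p2op g := by
  have : f - g = f + (-1 : ℂ) • g := by simp [sub_eq_add_neg]
  rw [this, p2_add hf (sm_smul _ hg), p2_smul _ hg]; simp [sub_eq_add_neg]

lemma sm_slice1 {f : WF} (hf : Sm f) (x : ℝ × ℝ) :
    DifferentiableAt ℝ (fun t => f (t, x.2)) x.1 :=
  DifferentiableAt.comp x.1 (g := f) (sm_diff hf _) (by fun_prop)

lemma sm_slice2 {f : WF} (hf : Sm f) (x : ℝ × ℝ) :
    DifferentiableAt ℝ (fun t => f (x.1, t)) x.2 :=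
  DifferentiableAt.comp x.2 (g := f) (sm_diff hf _) (by fun_prop)

lemma p1_q1 {f : WF} (hf : Sm f) : p1op (q1op f) = q1op (p1op f) - Complex.I • f := by
  funext x
  have h := ((hasDerivAt_id x.1).ofReal_comp.mul (sm_slice1 hf x).hasDerivAt).deriv
  have h' : deriv (fun t : ℝ => (t : ℂ) * f (t, x.2)) x.1 = _ := h
  simp only [p1op, q1op, Pi.sub_apply, Pi.smul_apply, smul_eq_mul, h']
  simp; ring

lemma p2_q2 {f : WF} (hf : Sm f) : p2op (q2op f) = q2op (p2op f) - Complex.I • f := by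
  funext x
  have h := ((hasDerivAt_id x.2).ofReal_comp.mul (sm_slice2 hf x).hasDerivAt).deriv
  have h' : deriv (fun t : ℝ => (t : ℂ) * f (x.1, t)) x.2 = _ := h
  simp only [p2op, q2op, Pi.sub_apply, Pi.smul_apply, smul_eq_mul, h']
  simp; ring

lemma p1_q2 {f : WF} (hf : Sm f) : p1op (q2op f) = q2op (p1op f) := by
  funext x
  simp only [p1op, q2op, deriv_const_mul _ (sm_slice1 hf x)]; ring

lemma p2_q1 {f : WF} (hf : Sm f) : p2op (q1op f) = q1op (p2op f) := by
  funext x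
  simp only [p2op, q1op, deriv_const_mul _ (sm_slice2 hf x)]; ring

lemma fd_fd {f : WF} (hf : Sm f) (v w x : ℝ × ℝ) :
    fderiv ℝ (fun y => fderiv ℝ f y v) x w = fderiv ℝ (fderiv ℝ f) x w v := by
  have hd : DifferentiableAt ℝ (fderiv ℝ f) x :=
    (ContDiff.fderiv_right (m := 1) hf (by norm_cast)).differentiable (by simp) x
  rw [fderiv_clm_apply hd (differentiableAt_const v)]
  simp

lemma p1_p2 {f : WF} (hf : Sm f) : p1op (p2op f) = p2op (p1op f) := by
  have e1 : p2op f = (-Complex.I) • fun x => fderiv ℝ f x (0, 1) := by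
    rw [p2_eq hf]; rfl
  have e2 : p1op f = (-Complex.I) • fun x => fderiv ℝ f x (1, 0) := by
    rw [p1_eq hf]; rfl
  rw [e1, e2, p1_smul _ (sm_fd hf _), p2_smul _ (sm_fd hf _), p1_eq (sm_fd hf _),
    p2_eq (sm_fd hf _)]
  funext x
  have hs : IsSymmSndFDerivAt ℝ f x :=
    (ContDiff.contDiffAt hf).isSymmSndFDerivAt (by simp; norm_cast)
  simp only [fd_fd hf, Pi.smul_apply]
  rw [hs.eq]

lemma C_def (f : WF) : Cop f = q1op (p2op f) - q2op (p1op f) := rfl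
lemma D_def (f : WF) : Dop f = q1op (p1op f) + q2op (p2op f) := rfl

lemma sm_C {f : WF} (hf : Sm f) : Sm (Cop f) :=
  sm_sub (sm_q1 (sm_p2 hf)) (sm_q2 (sm_p1 hf))
lemma sm_D {f : WF} (hf : Sm f) : Sm (Dop f) :=
  sm_add (sm_q1 (sm_p1 hf)) (sm_q2 (sm_p2 hf))

lemma C_add {f g : WF} (hf : Sm f) (hg : Sm g) : Cop (f + g) = Cop f + Cop g := by
  rw [C_def, C_def, C_def, p1_add hf hg, p2_add hf hg]
  funext x; simp [q1op, q2op]; ring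

lemma C_smul {f : WF} (c : ℂ) (hf : Sm f) : Cop (c • f) = c • Cop f := by
  rw [C_def, C_def, p1_smul c hf, p2_smul c hf]
  funext x; simp [q1op, q2op]; ring

lemma p1_C {f : WF} (hf : Sm f) : p1op (Cop f) = Cop (p1op f) - Complex.I • p2op f := by
  rw [C_def, C_def, p1_sub (sm_q1 (sm_p2 hf)) (sm_q2 (sm_p1 hf)), p1_q1 (sm_p2 hf),
    p1_q2 (sm_p1 hf), p1_p2 hf]
  abel

lemma p2_C {f : WF} (hf : Sm f) : p2op (Cop f) = Cop (p2op f) + Complex.I • p1op f := by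
  rw [C_def, C_def, p2_sub (sm_q1 (sm_p2 hf)) (sm_q2 (sm_p1 hf)), p2_q2 (sm_p1 hf),
    p2_q1 (sm_p2 hf), p1_p2 hf]
  abel

lemma D_C {f : WF} (hf : Sm f) : Dop (Cop f) = Cop (Dop f) := by
  have h1 := sm_p1 hf
  have h2 := sm_p2 hf
  rw [D_def, p1_C hf, p2_C hf, D_def, C_add (sm_q1 h1) (sm_q2 h2)]
  simp only [C_def]
  rw [p1_q1 h1, p2_q1 h1, p1_q2 h2, p2_q2 h2]
  funext x; simp [q1op, q2op]; ring

lemma lap_C {f : WF} (hf : Sm f) :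
    p1op (p1op (Cop f)) + p2op (p2op (Cop f)) = Cop (p1op (p1op f) + p2op (p2op f)) := by
  have h1 := sm_p1 hf
  have h2 := sm_p2 hf
  rw [p1_C hf, p2_C hf, p1_sub (sm_C h1) (sm_smul _ h2), p2_add (sm_C h2) (sm_smul _ h1),
    p1_smul _ h2, p2_smul _ h1, p1_C h1, p2_C h2, C_add (sm_p1 h1) (sm_p2 h2), p1_p2 hf]
  abel

lemma sm_Dn {f : WF} (hf : Sm f) (n : ℕ) : Sm (Dop^[n] f) := by
  induction n with
  | zero => exact hf
  | succ n ih => rw [Function.iterate_succ_apply']; exact sm_D ih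

lemma Dn_C {f : WF} (hf : Sm f) (n : ℕ) : Dop^[n] (Cop f) = Cop (Dop^[n] f) := by
  induction n with
  | zero => rfl
  | succ n ih =>
    rw [Function.iterate_succ_apply', Function.iterate_succ_apply', ih, D_C (sm_Dn hf n)]

lemma sum_C {f : WF} (hf : Sm f) (γ : ℕ → ℂ) (s : Finset ℕ) :
    Sm (∑ n ∈ s, γ n • Dop^[n] f) ∧
      ∑ n ∈ s, γ n • Dop^[n] (Cop f) = Cop (∑ n ∈ s, γ n • Dop^[n] f) := by
  classical
  induction s using Finset.induction_on with
  | empty =>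
    refine ⟨by rw [Finset.sum_empty]; exact contDiff_const (c := (0 : ℂ)), ?_⟩
    funext x; simp [Cop, q1op, q2op, p1op, p2op]
  | insert a s ha ih =>
    rw [Finset.sum_insert ha, Finset.sum_insert ha]
    have h := sm_smul (γ a) (sm_Dn hf a)
    exact ⟨sm_add h ih.1, by rw [C_add h ih.1, C_smul _ (sm_Dn hf a), ih.2, Dn_C hf]⟩

lemma H_def (N : ℕ) (γ : ℕ → ℂ) (f : WF) : HNop N γ f =
    p1op (p1op f) + p2op (p2op f) + ∑ n ∈ Finset.Icc 1 N, γ n • Dop^[n] f := by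
  simp [HNop, Finset.sum_apply]

/-- For every `N ≥ 1` and all complex parameters `γ₁, …, γ_N`, the generalized
quantum Zernike Hamiltonian commutes with the quantum angular momentum on
smooth functions: `Ĥ_N(Ĉψ) = Ĉ(Ĥ_Nψ)`. -/
theorem HNop_commutes_Cop (N : ℕ) (hN : 1 ≤ N) (γ : ℕ → ℂ)
    (ψ : WF) (hψ : ContDiff ℝ (⊤ : ℕ∞) ψ) :
    HNop N γ (Cop ψ) = Cop (HNop N γ ψ) := by
  have hf : Sm ψ := hψ
  have hs := sum_C hf γ (Finset.Icc 1 N)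
  rw [H_def, H_def, C_add (sm_add (sm_p1 (sm_p1 hf)) (sm_p2 (sm_p2 hf))) hs.1, lap_C hf, hs.2]
end
end
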